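/- Exact integral form of the end-to-end SNR CDF over EGG fading (Theorem 1, integral representation): let I₁ and I₂ be independent random variables whose laws have mixture EGG densities with parameters (ω₁, λ₁, a₁, b₁, c₁) and (ω₂, λ₂, a₂, b₂, c₂) respectively (each ωᵢ ∈ (0,1) and λᵢ, aᵢ, bᵢ, cᵢ > 0), let μ₁, μ₂ > 0, r₁, r₂ > 0, C > 0, set γᵢ = μᵢ·Iᵢ^{rᵢ}, and let γ = γ₁·γ₂/(γ₂ + C). Then for every t > 0, P(γ ≤ t) = 1 − ∫₀^∞ [ (ω₁/(r₁·λ₁·(z+t)))·((z+t)/μ₁)^(1/r₁)·exp(−(1/λ₁)·((z+t)/μ₁)^(1/r₁)) + (c₁·(1−ω₁)/(r₁·Γ(a₁)·(z+t)·b₁^(a₁·c₁)))·((z+t)/μ₁)^(a₁·c₁/r₁)·exp(−(1/b₁^{c₁})·((z+t)/μ₁)^(c₁/r₁)) ] · [ ω₂·exp(−(1/λ₂)·(C·t/(μ₂·z))^(1/r₂)) + ((1−ω₂)/Γ(a₂))·∫_{(1/b₂^{c₂})·(C·t/(μ₂·z))^(c₂/r₂)}^∞ u^(a₂−1)·exp(−u)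 du ] dz. -/

import Mathlib

/-!
The event `t < γ` is, up to the null sets where some `Iᵢ ≤ 0`, the event that `γ₁ > t` and
`γ₂ > C t / (γ₁ - t)`. Independence turns its probability into an integral over the law of `I₁` of
the survival function of `I₂` at `(C t / (μ₂ (μ₁ x ^ r₁ - t))) ^ (1 / r₂)`
(`survival_section`), and the integrand vanishes unless `x > (t / μ₁) ^ (1 / r₁)`.
The substitution `x = ((z + t) / μ₁) ^ (1 / r₁)`, which carries `z > 0` onto that half-line
(`setIntegral_rpow_subst`), gives the stated integral.

The survival function of an EGG law (`real_Ioi_of_egg`) is computed term by term: the exponential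
part is elementary, and `u = (x / b) ^ c` turns the generalized Gamma part into an upper incomplete
Gamma integral. Bochner integrals are used throughout, so integrability is only needed to split the
survival function into its two terms.
-/

open MeasureTheory Real Set ProbabilityTheory

/-- The mixture Exponential–Generalized Gamma (EGG) density. -/
noncomputable def eggDensity (ω lam a b c : ℝ) : ℝ → ℝ := fun x =>
  if 0 < x then
    ω / lam * Real.exp (-x / lam)
      + (1 - ω) * c * x ^ (a * c - 1) / (b ^ (a * c) * Real.Gamma a)
        * Real.exp (-(x / b) ^ c)
  else 0

lemma image_rpow_Ioi {m p s t : ℝ} (hm : 0 < m) (hp : 0 < p) (hst : 0 ≤ s + t) :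
    (fun z => ((z + t) / m) ^ p) '' Ioi s = Ioi (((s + t) / m) ^ p) := by
  ext y
  simp only [mem_image, mem_Ioi]
  constructor
  · rintro ⟨z, hz, rfl⟩
    apply Real.rpow_lt_rpow (by positivity) _ hp
    gcongr
  · intro hy
    have hy0 : 0 ≤ y := le_trans (by positivity) hy.le
    refine ⟨m * y ^ p⁻¹ - t, ?_, ?_⟩
    · have h1 : (s + t) / m < y ^ p⁻¹ :=
        (Real.lt_rpow_inv_iff_of_pos (by positivity) hy0 hp).2 hy
      rw [div_lt_iff₀ hm] at h1
      linarith
    · have : (m * y ^ p⁻¹ - t + t) / m = y ^ p⁻¹ := by field_simp; ring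
      simp only [this]
      rw [← Real.rpow_mul hy0, inv_mul_cancel₀ hp.ne', Real.rpow_one]

lemma injOn_rpow_Ioi {m p s t : ℝ} (hm : 0 < m) (hp : 0 < p) (hst : 0 ≤ s + t) :
    InjOn (fun z => ((z + t) / m) ^ p) (Ioi s) := by
  intro x hx y hy h
  have hx' : 0 ≤ x + t := by have := mem_Ioi.1 hx; linarith
  have hy' : 0 ≤ y + t := by have := mem_Ioi.1 hy; linarith
  have h1 := (Real.rpow_left_inj (x := (x + t) / m) (y := (y + t) / m)
    (by positivity) (by positivity) hp.ne').1 h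
  rw [div_left_inj' hm.ne'] at h1
  linarith

lemma hasDerivWithinAt_rpow_Ioi {m p s t : ℝ} (hm : 0 < m) (hst : 0 ≤ s + t) :
    ∀ z ∈ Ioi s, HasDerivWithinAt (fun z => ((z + t) / m) ^ p)
      (p / m * ((z + t) / m) ^ (p - 1)) (Ioi s) z := by
  intro z hz
  have hz' : 0 < z + t := by have := mem_Ioi.1 hz; linarith
  have h1 : HasDerivAt (fun z => (z + t) / m) (1 / m) z :=
    ((hasDerivAt_id z).add_const t).div_const m
  have h2 := h1.rpow_const (p := p) (Or.inl (by positivity))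
  refine (h2.congr_deriv ?_).hasDerivWithinAt
  ring

lemma abs_smul_rpow {m p s t z x : ℝ} (hm : 0 < m) (hp : 0 < p) (hst : 0 ≤ s + t)
    (hz : z ∈ Ioi s) :
    |p / m * ((z + t) / m) ^ (p - 1)| • x = p / m * ((z + t) / m) ^ (p - 1) * x := by
  have hz' : 0 < z + t := by have := mem_Ioi.1 hz; linarith
  rw [abs_of_pos (by positivity), smul_eq_mul]

lemma setIntegral_rpow_subst {m p s t : ℝ} (hm : 0 < m) (hp : 0 < p) (hst : 0 ≤ s + t)
    (g : ℝ → ℝ) :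
    ∫ x in Ioi (((s + t) / m) ^ p), g x
      = ∫ z in Ioi s, p / m * ((z + t) / m) ^ (p - 1) * g (((z + t) / m) ^ p) := by
  rw [← image_rpow_Ioi hm hp hst, integral_image_eq_integral_abs_deriv_smul measurableSet_Ioi
    (hasDerivWithinAt_rpow_Ioi hm hst) (injOn_rpow_Ioi hm hp hst)]
  exact setIntegral_congr_fun measurableSet_Ioi fun z hz => abs_smul_rpow hm hp hst hz

lemma integrableOn_rpow_subst {m p s t : ℝ} (hm : 0 < m) (hp : 0 < p) (hst : 0 ≤ s + t)
    (g : ℝ → ℝ) :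
    IntegrableOn g (Ioi (((s + t) / m) ^ p)) ↔
      IntegrableOn (fun z => p / m * ((z + t) / m) ^ (p - 1) * g (((z + t) / m) ^ p))
        (Ioi s) := by
  rw [← image_rpow_Ioi hm hp hst, integrableOn_image_iff_integrableOn_abs_deriv_smul
    measurableSet_Ioi (hasDerivWithinAt_rpow_Ioi hm hst) (injOn_rpow_Ioi hm hp hst)]
  exact integrableOn_congr_fun (fun z hz => abs_smul_rpow hm hp hst hz) measurableSet_Ioi

lemma measurable_eggDensity (ω lam a b c : ℝ) : Measurable (eggDensity ω lam a b c) := by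
  unfold eggDensity
  refine Measurable.ite measurableSet_Ioi ?_ measurable_const
  fun_prop

lemma eggDensity_nonneg {ω lam a b c : ℝ} (hω : ω ∈ Ioo (0 : ℝ) 1) (hlam : 0 < lam)
    (ha : 0 < a) (hb : 0 < b) (hc : 0 < c) (x : ℝ) : 0 ≤ eggDensity ω lam a b c x := by
  unfold eggDensity
  have h1 := hω.1
  have h2 : 0 < 1 - ω := sub_pos.2 hω.2
  have h3 := Real.Gamma_pos_of_pos ha
  split_ifs with hx
  · positivity
  · exact le_rfl

/-- The integral against an EGG law as a Lebesgue integral. No integrability of `g` is required: both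
sides are `0` when it fails. -/
lemma integral_egg {ω lam a b c : ℝ} (hω : ω ∈ Ioo (0 : ℝ) 1) (hlam : 0 < lam)
    (ha : 0 < a) (hb : 0 < b) (hc : 0 < c) {ν : Measure ℝ}
    (hν : ν = volume.withDensity fun x => ENNReal.ofReal (eggDensity ω lam a b c x))
    (g : ℝ → ℝ) :
    ∫ x, g x ∂ν = ∫ x, eggDensity ω lam a b c x * g x := by
  rw [hν, integral_withDensity_eq_integral_toReal_smul
    (measurable_eggDensity ω lam a b c).ennreal_ofReal (by simp)]
  simp only [ENNReal.toReal_ofReal (eggDensity_nonneg hω hlam ha hb hc _), smul_eq_mul]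

lemma ae_pos_of_egg {ω lam a b c : ℝ} {ν : Measure ℝ}
    (hν : ν = volume.withDensity fun x => ENNReal.ofReal (eggDensity ω lam a b c x)) :
    ∀ᵐ x ∂ν, 0 < x := by
  rw [hν, ae_withDensity_iff (measurable_eggDensity ω lam a b c).ennreal_ofReal]
  refine Filter.Eventually.of_forall fun x hx => ?_
  by_contra h
  exact hx (by simp [eggDensity, h])

/-- The survival function of an EGG law: an exponential tail plus a normalized upper incomplete
Gamma function. -/
lemma real_Ioi_of_egg {ω lam a b c : ℝ} (hω : ω ∈ Ioo (0 : ℝ) 1) (hlam : 0 < lam)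
    (ha : 0 < a) (hb : 0 < b) (hc : 0 < c) {ν : Measure ℝ}
    (hν : ν = volume.withDensity fun x => ENNReal.ofReal (eggDensity ω lam a b c x))
    {y : ℝ} (hy : 0 ≤ y) :
    ν.real (Ioi y) = ω * Real.exp (-(1 / lam) * y)
      + (1 - ω) / Real.Gamma a * ∫ u in Ioi ((y / b) ^ c), u ^ (a - 1) * Real.exp (-u) := by
  have hΓ := Real.Gamma_pos_of_pos ha
  have hG : IntegrableOn (fun u : ℝ => u ^ (a - 1) * Real.exp (-u)) (Ioi (((y + 0) / b) ^ c)) := by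
    have := (Real.GammaIntegral_convergent ha).mono_set
      (Ioi_subset_Ioi (show 0 ≤ ((y + 0) / b) ^ c by positivity))
    simpa only [mul_comm] using this
  have hG' := (integrableOn_rpow_subst hb hc (by linarith) _).1 hG
  have hE : IntegrableOn (fun x : ℝ => Real.exp (-(1 / lam) * x)) (Ioi y) :=
    integrableOn_exp_mul_Ioi (by simpa using hlam) y
  have hsplit : ∀ x ∈ Ioi y, eggDensity ω lam a b c x
      = ω / lam * Real.exp (-(1 / lam) * x) + (1 - ω) / Real.Gamma a *
        (c / b * ((x + 0) / b) ^ (c - 1) *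
          ((((x + 0) / b) ^ c) ^ (a - 1) * Real.exp (-((x + 0) / b) ^ c))) := by
    intro x hx
    have hx0 : 0 < x := hy.trans_lt hx
    have hpow : x ^ (a * c - 1) / b ^ (a * c)
        = 1 / b * ((x / b) ^ (c - 1) * ((x / b) ^ c) ^ (a - 1)) := by
      rw [← Real.rpow_mul (by positivity), ← Real.rpow_add (by positivity),
        show c - 1 + c * (a - 1) = a * c - 1 by ring, Real.div_rpow hx0.le hb.le,
        Real.rpow_sub hb, Real.rpow_one]
      field_simp
    have : (1 - ω) * c * x ^ (a * c - 1) / (b ^ (a * c) * Real.Gamma a)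
        = (1 - ω) * c / Real.Gamma a * (x ^ (a * c - 1) / b ^ (a * c)) := by
      field_simp
    simp only [eggDensity, if_pos hx0, add_zero]
    rw [this, hpow]
    have : -x / lam = -(1 / lam) * x := by ring
    rw [this]
    ring
  have h1 : ν.real (Ioi y) = ∫ x in Ioi y, eggDensity ω lam a b c x := by
    rw [← integral_indicator_one measurableSet_Ioi, integral_egg hω hlam ha hb hc hν,
      ← integral_indicator measurableSet_Ioi]
    congr 1
    ext x
    by_cases hx : x ∈ Ioi y <;> simp [hx]
  rw [h1, setIntegral_congr_fun measurableSet_Ioi hsplit,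
    integral_add (hE.const_mul _) (hG'.const_mul _), integral_const_mul, integral_const_mul,
    integral_exp_mul_Ioi (by simpa using hlam)]
  have h2 := setIntegral_rpow_subst hb hc (s := y) (t := 0) (by linarith)
    (fun u : ℝ => u ^ (a - 1) * Real.exp (-u))
  rw [← h2, add_zero]
  congr 1
  field_simp

/-- For a fixed first-hop SNR `z + t` with `z > 0`, the positive second-hop irradiances for which the
end-to-end SNR exceeds `t` form an open half-line. -/
lemma survival_section {μ₂ r₂ C t z y : ℝ} (hμ₂ : 0 < μ₂) (hr₂ : 0 < r₂) (hC : 0 < C)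
    (ht : 0 < t) (hz : 0 < z) (hy : 0 < y) :
    t < (z + t) * (μ₂ * y ^ r₂) / (μ₂ * y ^ r₂ + C) ↔ (C * t / (μ₂ * z)) ^ (1 / r₂) < y := by
  have hyr : 0 < y ^ r₂ := by positivity
  rw [lt_div_iff₀ (by positivity), one_div,
    Real.rpow_inv_lt_iff_of_pos (by positivity) hy.le hr₂, div_lt_iff₀ (by positivity)]
  constructor <;> intro h <;> nlinarith

/-- The end-to-end SNR is the first-hop SNR `w` times a factor in `(0, 1)`, so it is at most
`t > 0` whenever `w ≤ t`. -/
lemma not_lt_of_first_hop_le {μ₂ r₂ C t w y : ℝ} (hμ₂ : 0 < μ₂) (hC : 0 < C)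
    (ht : 0 < t) (hw : w ≤ t) (hy : 0 < y) :
    ¬ t < w * (μ₂ * y ^ r₂) / (μ₂ * y ^ r₂ + C) := by
  have hyr : 0 < y ^ r₂ := by positivity
  rw [not_lt, div_le_iff₀ (by positivity)]
  have : 0 < μ₂ * y ^ r₂ := by positivity
  nlinarith [mul_pos ht hC]

theorem endtoend_cdf_egg_integral_form {Ω : Type*} [MeasurableSpace Ω]
    (P : Measure Ω) [IsProbabilityMeasure P]
    (I₁ I₂ : Ω → ℝ) (hI₁ : Measurable I₁) (hI₂ : Measurable I₂)
    (hindep : IndepFun I₁ I₂ P)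
    (ω₁ lam₁ a₁ b₁ c₁ ω₂ lam₂ a₂ b₂ c₂ : ℝ)
    (hω₁ : ω₁ ∈ Set.Ioo (0 : ℝ) 1) (hlam₁ : 0 < lam₁) (ha₁ : 0 < a₁) (hb₁ : 0 < b₁)
    (hc₁ : 0 < c₁)
    (hω₂ : ω₂ ∈ Set.Ioo (0 : ℝ) 1) (hlam₂ : 0 < lam₂) (ha₂ : 0 < a₂) (hb₂ : 0 < b₂)
    (hc₂ : 0 < c₂)
    (hlaw₁ : Measure.map I₁ P
      = volume.withDensity (fun x => ENNReal.ofReal (eggDensity ω₁ lam₁ a₁ b₁ c₁ x)))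
    (hlaw₂ : Measure.map I₂ P
      = volume.withDensity (fun x => ENNReal.ofReal (eggDensity ω₂ lam₂ a₂ b₂ c₂ x)))
    (μ₁ μ₂ r₁ r₂ C : ℝ) (hμ₁ : 0 < μ₁) (hμ₂ : 0 < μ₂) (hr₁ : 0 < r₁) (hr₂ : 0 < r₂)
    (hC : 0 < C)
    (γ₁ γ₂ γ : Ω → ℝ)
    (hγ₁ : γ₁ = fun a => μ₁ * I₁ a ^ r₁) (hγ₂ : γ₂ = fun a => μ₂ * I₂ a ^ r₂)
    (hγ : γ = fun a => γ₁ a * γ₂ a / (γ₂ a + C))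
    (t : ℝ) (ht : 0 < t) :
    (P {a | γ a ≤ t}).toReal
      = 1 - ∫ z in Set.Ioi (0 : ℝ),
          (ω₁ / (r₁ * lam₁ * (z + t)) * ((z + t) / μ₁) ^ (1 / r₁)
              * Real.exp (-(1 / lam₁) * ((z + t) / μ₁) ^ (1 / r₁))
            + c₁ * (1 - ω₁) / (r₁ * Real.Gamma a₁ * (z + t) * b₁ ^ (a₁ * c₁))
              * ((z + t) / μ₁) ^ (a₁ * c₁ / r₁)
              * Real.exp (-(1 / b₁ ^ c₁) * ((z + t) / μ₁) ^ (c₁ / r₁)))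
          * (ω₂ * Real.exp (-(1 / lam₂) * (C * t / (μ₂ * z)) ^ (1 / r₂))
            + (1 - ω₂) / Real.Gamma a₂
              * ∫ u in Set.Ioi ((1 / b₂ ^ c₂) * (C * t / (μ₂ * z)) ^ (c₂ / r₂)),
                  u ^ (a₂ - 1) * Real.exp (-u)) := by
  have hP₁ : IsProbabilityMeasure (P.map I₁) := Measure.isProbabilityMeasure_map hI₁.aemeasurable
  have hP₂ : IsProbabilityMeasure (P.map I₂) := Measure.isProbabilityMeasure_map hI₂.aemeasurable
  set S : Set (ℝ × ℝ) :=
    {p | t < μ₁ * p.1 ^ r₁ * (μ₂ * p.2 ^ r₂) / (μ₂ * p.2 ^ r₂ + C)} with hS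
  have hSm : MeasurableSet S := measurableSet_lt measurable_const (by fun_prop)
  have hcompl : {a | γ a ≤ t} = ((fun a => (I₁ a, I₂ a)) ⁻¹' S)ᶜ := by
    ext a
    simp [hS, hγ, hγ₁, hγ₂]
  have hpm : Measurable fun a => (I₁ a, I₂ a) := hI₁.prodMk hI₂
  have hfub : P.real ((fun a => (I₁ a, I₂ a)) ⁻¹' S)
      = ∫ x, (P.map I₂).real (Prod.mk x ⁻¹' S) ∂(P.map I₁) := by
    rw [← map_measureReal_apply hpm hSm,
      (indepFun_iff_map_prod_eq_prod_map_map hI₁.aemeasurable hI₂.aemeasurable).1 hindep,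
      measureReal_def, Measure.prod_apply hSm]
    simp only [measureReal_def]
    exact (integral_toReal (measurable_measure_prodMk_left hSm).aemeasurable
      (Filter.Eventually.of_forall fun x => measure_lt_top _ _)).symm
  rw [← measureReal_def, hcompl, probReal_compl_eq_one_sub (hpm hSm), hfub,
    integral_egg hω₁ hlam₁ ha₁ hb₁ hc₁ hlaw₁]
  congr 1
  have hpos₂ := ae_pos_of_egg hlaw₂
  -- Below the threshold either the density vanishes or the section of the event is null.
  have hzero : ∀ x, x ∉ Ioi (((0 + t) / μ₁) ^ (1 / r₁)) →
      eggDensity ω₁ lam₁ a₁ b₁ c₁ x * (P.map I₂).real (Prod.mk x ⁻¹' S) = 0 := by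
    intro x hx
    rcases le_or_gt x 0 with hx0 | hx0
    · simp [eggDensity, not_lt.2 hx0]
    · have hw : μ₁ * x ^ r₁ ≤ t := by
        rw [mem_Ioi, not_lt, zero_add, one_div,
          Real.le_rpow_inv_iff_of_pos hx0.le (by positivity) hr₁, le_div_iff₀ hμ₁] at hx
        linarith
      have : (P.map I₂).real (Prod.mk x ⁻¹' S) = 0 := by
        rw [measureReal_def, ENNReal.toReal_eq_zero_iff]
        left
        rw [measure_eq_zero_iff_ae_notMem]
        filter_upwards [hpos₂] with y hy
        exact not_lt_of_first_hop_le hμ₂ hC ht hw hy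
      rw [this, mul_zero]
  rw [← setIntegral_eq_integral_of_forall_compl_eq_zero hzero,
    setIntegral_rpow_subst hμ₁ (by positivity) (by linarith)]
  refine setIntegral_congr_fun measurableSet_Ioi fun z hz => ?_
  have hz : 0 < z := hz
  have hzt : 0 < z + t := by linarith
  have hw : 0 < (z + t) / μ₁ := by positivity
  have hSz : (P.map I₂).real (Prod.mk (((z + t) / μ₁) ^ (1 / r₁)) ⁻¹' S)
      = (P.map I₂).real (Ioi ((C * t / (μ₂ * z)) ^ (1 / r₂))) := by
    apply measureReal_congr
    filter_upwards [hpos₂] with y hy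
    have h1 : μ₁ * (((z + t) / μ₁) ^ (1 / r₁)) ^ r₁ = z + t := by
      rw [← Real.rpow_mul hw.le, one_div, inv_mul_cancel₀ hr₁.ne', Real.rpow_one]
      field_simp
    refine propext ?_
    change t < μ₁ * (((z + t) / μ₁) ^ (1 / r₁)) ^ r₁ * (μ₂ * y ^ r₂) / (μ₂ * y ^ r₂ + C) ↔ _
    rw [h1]
    exact survival_section hμ₂ hr₂ hC ht hz hy
  have hq : 0 < C * t / (μ₂ * z) := by positivity
  have hlow : ((C * t / (μ₂ * z)) ^ (1 / r₂) / b₂) ^ c₂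
      = 1 / b₂ ^ c₂ * (C * t / (μ₂ * z)) ^ (c₂ / r₂) := by
    rw [Real.div_rpow (by positivity) hb₂.le, ← Real.rpow_mul hq.le]
    ring_nf
  rw [hSz, real_Ioi_of_egg hω₂ hlam₂ ha₂ hb₂ hc₂ hlaw₂ (by positivity), hlow, ← mul_assoc]
  congr 1
  have hΓ := Real.Gamma_pos_of_pos ha₁
  have hx : 0 < ((z + t) / μ₁) ^ (1 / r₁) := by positivity
  have e1 : ((z + t) / μ₁) ^ (1 / r₁ - 1) = ((z + t) / μ₁) ^ (1 / r₁) * (μ₁ / (z + t)) := by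
    rw [Real.rpow_sub hw, Real.rpow_one, div_eq_mul_inv, inv_div]
  have e2 : (((z + t) / μ₁) ^ (1 / r₁)) ^ (a₁ * c₁ - 1)
      = ((z + t) / μ₁) ^ (a₁ * c₁ / r₁) / ((z + t) / μ₁) ^ (1 / r₁) := by
    rw [Real.rpow_sub hx, Real.rpow_one, ← Real.rpow_mul hw.le]
    ring_nf
  have e3 : (((z + t) / μ₁) ^ (1 / r₁) / b₁) ^ c₁
      = 1 / b₁ ^ c₁ * ((z + t) / μ₁) ^ (c₁ / r₁) := by
    rw [Real.div_rpow hx.le hb₁.le, ← Real.rpow_mul hw.le]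
    ring_nf
  have e4 : -((z + t) / μ₁) ^ (1 / r₁) / lam₁ = -(1 / lam₁) * ((z + t) / μ₁) ^ (1 / r₁) := by
    ring
  simp only [eggDensity, if_pos hx]
  rw [e1, e2, e3, e4, ← neg_mul]
  generalize ((z + t) / μ₁) ^ (1 / r₁) = X at hx
  generalize Real.exp (-(1 / lam₁) * X) = E
  generalize Real.exp (-(1 / b₁ ^ c₁) * ((z + t) / μ₁) ^ (c₁ / r₁)) = F
  generalize ((z + t) / μ₁) ^ (a₁ * c₁ / r₁) = Y
  have hB : 0 < b₁ ^ (a₁ * c₁) := by positivity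
  generalize b₁ ^ (a₁ * c₁) = B at hB
  field_simp
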